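/- Let Φ be a measurable function on ℝ^n and A(y) a measurable n×n-matrix-valued function with A(y) invertible for a.e. y in the support of Φ, satisfying ∫_{ℝ^n} |det A(y)|^{-1} (1 + ‖A(y)‖²) |Φ(y)| dy < ∞. Then for every f ∈ W^{2,1}(ℝ^n), the matrix of second-order weak partial derivatives of H_{Φ,A} f satisfies, for a.e. x, (∂_{ij} H_{Φ,A} f(x))_{n×n} = ∫_{ℝ^n} Φ(y) A(y)^T · (∂_{ij} f(A(y)x))_{n×n} · A(y) dy, where ∂_{ij} denotes ∂²/∂x_i∂x_j taken in the weak sense. -/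

import Mathlib

open MeasureTheory

noncomputable section

/-- Action of an `n × n` matrix on a vector of `ℝⁿ` (Euclidean space). -/
def matVec {n : ℕ} (M : Matrix (Fin n) (Fin n) ℝ) (x : EuclideanSpace ℝ (Fin n)) :
    EuclideanSpace ℝ (Fin n) :=
  (WithLp.equiv 2 (Fin n → ℝ)).symm (M.mulVec (WithLp.equiv 2 (Fin n → ℝ) x))

/-- Hilbert–Schmidt (Frobenius) norm of a matrix. -/
def frobNorm {n : ℕ} (M : Matrix (Fin n) (Fin n) ℝ) : ℝ :=
  Real.sqrt (∑ i, ∑ j, (M i j) ^ 2)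

/-- Classical partial derivative `∂/∂xᵢ`. -/
def pderiv1 {n : ℕ} (i : Fin n) (f : EuclideanSpace ℝ (Fin n) → ℝ) :
    EuclideanSpace ℝ (Fin n) → ℝ :=
  fun x => fderiv ℝ f x (EuclideanSpace.single i 1)

/-- Classical multi-index derivative `D^α = ∂^{α₁}_{x₁} ⋯ ∂^{αₙ}_{xₙ}`. -/
def mderiv {n : ℕ} (α : Fin n → ℕ) (f : EuclideanSpace ℝ (Fin n) → ℝ) :
    EuclideanSpace ℝ (Fin n) → ℝ :=
  (List.finRange n).foldr (fun i g => (pderiv1 i)^[α i] g) f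

/-- `g` is the weak derivative of order `α` of `f`:
`∫ f · D^α φ = (−1)^{|α|} ∫ g · φ` for all test functions `φ ∈ C_c^∞`. -/
def IsWeakDeriv {n : ℕ} (α : Fin n → ℕ) (f g : EuclideanSpace ℝ (Fin n) → ℝ) : Prop :=
  ∀ φ : EuclideanSpace ℝ (Fin n) → ℝ, ContDiff ℝ (⊤ : ℕ∞) φ → HasCompactSupport φ →
    ∫ x, f x * mderiv α φ x = (-1 : ℝ) ^ (∑ i, α i) * ∫ x, g x * φ x

/-- `D` is a family of integrable weak derivatives of `f` for all multi-indices `|α| ≤ k`;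
this expresses `f ∈ W^{k,1}(ℝⁿ)` together with a choice of its weak derivatives. -/
def HasSobolevDerivs {n : ℕ} (k : ℕ) (f : EuclideanSpace ℝ (Fin n) → ℝ)
    (D : (Fin n → ℕ) → EuclideanSpace ℝ (Fin n) → ℝ) : Prop :=
  D 0 = f ∧ ∀ α : Fin n → ℕ, (∑ i, α i) ≤ k → Integrable (D α) ∧ IsWeakDeriv α f (D α)

/-- The Sobolev norm `‖f‖_{W^{k,1}} = Σ_{|α| ≤ k} ‖D^α f‖_{L¹}`, computed from a family `D`
of weak derivatives. -/
def sobolevNorm {n : ℕ} (k : ℕ) (D : (Fin n → ℕ) → EuclideanSpace ℝ (Fin n) → ℝ) : ℝ :=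
  ∑ α ∈ (Fintype.piFinset fun _ : Fin n => Finset.range (k + 1)).filter
      (fun α => ∑ i, α i ≤ k), ∫ x, |D α x|

/-- The generalized Hausdorff operator `H_{Φ,A} f (x) = ∫ Φ(y) f(A(y)x) dy`. -/
def hausdorffOp {n : ℕ} (Φ : EuclideanSpace ℝ (Fin n) → ℝ)
    (A : EuclideanSpace ℝ (Fin n) → Matrix (Fin n) (Fin n) ℝ)
    (f : EuclideanSpace ℝ (Fin n) → ℝ) : EuclideanSpace ℝ (Fin n) → ℝ :=
  fun x => ∫ y, Φ y * f (matVec (A y) x)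

/-!
For a fixed invertible `M`, testing the weak derivatives of `f` against `φ ∘ M⁻¹` and changing
variables gives the chain rule for `x ↦ f (M x)`; applied twice, it produces the matrix
`Mᵀ · Hess f (M x) · M`. The same change of variables bounds the `L¹` norm of
`(y, x) ↦ c(y) g(A(y) x)` by `‖g‖₁ ∫ |det A|⁻¹ |c|`. Since `|Φ|` and every `|a_{ki} a_{lj} Φ|`
are at most `(1 + ‖A‖²) |Φ|`, Fubini's theorem allows the identities for the matrices `A(y)` to be
integrated over `y`. The set `Φ = 0`, where `A` may be singular, is removed by restricting the
measure to the support of `Φ`.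
-/

section ClassicalDerivatives

open scoped ContDiff

variable {n : ℕ} {f : EuclideanSpace ℝ (Fin n) → ℝ}

lemma contDiff_pderiv1 (hf : ContDiff ℝ ∞ f) (i : Fin n) : ContDiff ℝ ∞ (pderiv1 i f) :=
  (hf.fderiv_right (m := ∞) (by simp)).clm_apply contDiff_const

lemma hasCompactSupport_pderiv1 (hf : HasCompactSupport f) (i : Fin n) :
    HasCompactSupport (pderiv1 i f) :=
  hf.fderiv_apply ℝ _

lemma pderiv1_pderiv1_apply (hf : ContDiff ℝ 2 f) (i j : Fin n) (x : EuclideanSpace ℝ (Fin n)) :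
    pderiv1 i (pderiv1 j f) x =
      fderiv ℝ (fderiv ℝ f) x (EuclideanSpace.single i 1) (EuclideanSpace.single j 1) := by
  have hd : DifferentiableAt ℝ (fderiv ℝ f) x :=
    (hf.fderiv_right (m := 1) (by norm_num)).differentiable one_ne_zero x
  change fderiv ℝ (fun z => fderiv ℝ f z (EuclideanSpace.single j 1)) x _ = _
  simp [fderiv_clm_apply hd (differentiableAt_const _)]

lemma pderiv1_comm (hf : ContDiff ℝ 2 f) (i j : Fin n) :
    pderiv1 i (pderiv1 j f) = pderiv1 j (pderiv1 i f) := by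
  funext x
  rw [pderiv1_pderiv1_apply hf, pderiv1_pderiv1_apply hf]
  exact (hf.contDiffAt.isSymmSndFDerivAt (by simp)).eq _ _

lemma pderiv1_iterate_comm (hf : ContDiff ℝ ∞ f) (i j : Fin n) (m : ℕ) :
    pderiv1 i ((pderiv1 j)^[m] f) = (pderiv1 j)^[m] (pderiv1 i f) := by
  induction m generalizing f with
  | zero => rfl
  | succ m ih =>
    rw [Function.iterate_succ_apply, Function.iterate_succ_apply, ih (contDiff_pderiv1 hf j),
      pderiv1_comm (hf.of_le (WithTop.coe_le_coe.2 le_top))]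

/-- The factors of the multi-index derivative `D^α` in the directions listed in `l`. The operator
`mderiv α` is the case `l = List.finRange n`; arbitrary lists allow induction on the directions. -/
def mderivList (l : List (Fin n)) (α : Fin n → ℕ) (f : EuclideanSpace ℝ (Fin n) → ℝ) :
    EuclideanSpace ℝ (Fin n) → ℝ :=
  l.foldr (fun i g => (pderiv1 i)^[α i] g) f

lemma mderivList_cons (i : Fin n) (l : List (Fin n)) (α : Fin n → ℕ)
    (f : EuclideanSpace ℝ (Fin n) → ℝ) :
    mderivList (i :: l) α f = (pderiv1 i)^[α i] (mderivList l α f) :=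
  rfl

lemma mderivList_induction {p : (EuclideanSpace ℝ (Fin n) → ℝ) → Prop} (hf : p f)
    (hp : ∀ i g, p g → p (pderiv1 i g)) (l : List (Fin n)) (α : Fin n → ℕ) :
    p (mderivList l α f) := by
  induction l with
  | nil => exact hf
  | cons i l ih => exact Function.Iterate.rec p ih (hp i) (α i)

lemma contDiff_mderivList (hf : ContDiff ℝ ∞ f) (l : List (Fin n)) (α : Fin n → ℕ) :
    ContDiff ℝ ∞ (mderivList l α f) :=
  mderivList_induction hf (fun i _ hg => contDiff_pderiv1 hg i) l α

lemma contDiff_mderiv (hf : ContDiff ℝ ∞ f) (α : Fin n → ℕ) : ContDiff ℝ ∞ (mderiv α f) :=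
  contDiff_mderivList hf _ α

lemma hasCompactSupport_mderiv (hf : HasCompactSupport f) (α : Fin n → ℕ) :
    HasCompactSupport (mderiv α f) :=
  mderivList_induction hf (fun i _ hg => hasCompactSupport_pderiv1 hg i) (List.finRange n) α

lemma pderiv1_mderivList (hf : ContDiff ℝ ∞ f) (i : Fin n) (l : List (Fin n)) (α : Fin n → ℕ) :
    pderiv1 i (mderivList l α f) = mderivList l α (pderiv1 i f) := by
  induction l with
  | nil => rfl
  | cons j l ih =>
    rw [mderivList_cons, mderivList_cons, pderiv1_iterate_comm (contDiff_mderivList hf l α), ih]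

lemma mderivList_congr {l : List (Fin n)} {α β : Fin n → ℕ} (h : ∀ i ∈ l, α i = β i)
    (f : EuclideanSpace ℝ (Fin n) → ℝ) : mderivList l α f = mderivList l β f :=
  List.foldr_ext _ _ _ fun i hi g => by rw [h i hi]

lemma mderivList_single_add (hf : ContDiff ℝ ∞ f) {i : Fin n} {l : List (Fin n)} (hl : l.Nodup)
    (hi : i ∈ l) (α : Fin n → ℕ) :
    mderivList l (Pi.single i 1 + α) f = mderivList l α (pderiv1 i f) := by
  induction l with
  | nil => simp at hi
  | cons j l ih =>
    obtain ⟨hjl, hl⟩ := List.nodup_cons.1 hl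
    rw [mderivList_cons, mderivList_cons]
    obtain rfl | hij := eq_or_ne i j
    · have hα : mderivList l (Pi.single i 1 + α) f = mderivList l α f :=
        mderivList_congr (fun k hk => by simp [ne_of_mem_of_not_mem hk hjl]) f
      rw [hα, ← pderiv1_mderivList hf, ← Function.iterate_succ_apply]
      simp [add_comm]
    · rw [ih hl (List.mem_of_ne_of_mem hij hi)]
      simp [hij.symm]

lemma mderiv_single_add (hf : ContDiff ℝ ∞ f) (i : Fin n) (α : Fin n → ℕ) :
    mderiv (Pi.single i 1 + α) f = mderiv α (pderiv1 i f) :=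
  mderivList_single_add hf (List.nodup_finRange n) (List.mem_finRange i) α

lemma mderiv_zero (f : EuclideanSpace ℝ (Fin n) → ℝ) : mderiv 0 f = f :=
  List.foldr_fixed (List.finRange n)

lemma mderiv_single (hf : ContDiff ℝ ∞ f) (i : Fin n) : mderiv (Pi.single i 1) f = pderiv1 i f := by
  simpa only [add_zero, mderiv_zero] using mderiv_single_add hf i 0

end ClassicalDerivatives

section LinearSubstitution

variable {n : ℕ} {M : Matrix (Fin n) (Fin n) ℝ}

lemma det_toLpLin_ne_zero (hM : M.det ≠ 0) : LinearMap.det (Matrix.toLpLin 2 2 M) ≠ 0 := by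
  rwa [LinearMap.det_toLpLin]

/-- The invertible substitution `x ↦ M x` of `ℝⁿ`, for `M` of nonzero determinant. -/
def matVecEquiv (M : Matrix (Fin n) (Fin n) ℝ) (hM : M.det ≠ 0) :
    EuclideanSpace ℝ (Fin n) ≃L[ℝ] EuclideanSpace ℝ (Fin n) :=
  ((Matrix.toLpLin 2 2 M).equivOfDetNeZero (det_toLpLin_ne_zero hM)).toContinuousLinearEquiv

lemma coe_matVecEquiv (hM : M.det ≠ 0) : ⇑(matVecEquiv M hM) = matVec M :=
  rfl

lemma quasiMeasurePreserving_matVec (hM : M.det ≠ 0) :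
    Measure.QuasiMeasurePreserving (matVec M) :=
  Measure.LinearMap.quasiMeasurePreserving _ _ (det_toLpLin_ne_zero hM)

lemma map_matVec_volume (hM : M.det ≠ 0) :
    Measure.map (matVec M) volume = ENNReal.ofReal |M.det|⁻¹ • volume := by
  have h := Measure.map_linearMap_addHaar_eq_smul_addHaar
    (volume : Measure (EuclideanSpace ℝ (Fin n))) (det_toLpLin_ne_zero hM)
  rwa [LinearMap.det_toLpLin, abs_inv] at h

lemma measurableEmbedding_matVec (hM : M.det ≠ 0) : MeasurableEmbedding (matVec M) :=
  (matVecEquiv M hM).toHomeomorph.measurableEmbedding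

variable {F : Type*} [NormedAddCommGroup F]

lemma integrable_comp_matVec (hM : M.det ≠ 0) {g : EuclideanSpace ℝ (Fin n) → F}
    (hg : Integrable g) : Integrable (fun x => g (matVec M x)) := by
  refine (measurableEmbedding_matVec hM).integrable_map_iff.1 ?_
  rw [map_matVec_volume hM]
  exact hg.smul_measure ENNReal.ofReal_ne_top

lemma integral_comp_matVec [NormedSpace ℝ F] (hM : M.det ≠ 0) (g : EuclideanSpace ℝ (Fin n) → F) :
    ∫ x, g (matVec M x) = |M.det|⁻¹ • ∫ x, g x := by
  rw [← (measurableEmbedding_matVec hM).integral_map g, map_matVec_volume hM,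
    integral_smul_measure, ENNReal.toReal_ofReal (by positivity)]

lemma integral_sum_mul_comp_matVec (hM : M.det ≠ 0) {ι : Type*} (s : Finset ι) (c : ι → ℝ)
    {G : ι → EuclideanSpace ℝ (Fin n) → ℝ} (hG : ∀ l ∈ s, Integrable (G l)) :
    ∫ x, ∑ l ∈ s, c l * G l (matVec M x) = |M.det|⁻¹ * ∑ l ∈ s, c l * ∫ x, G l x := by
  rw [integral_comp_matVec hM fun x => ∑ l ∈ s, c l * G l x,
    integral_finsetSum s fun l hl => (hG l hl).const_mul (c l), smul_eq_mul]
  simp only [integral_const_mul]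

lemma matVec_single (M : Matrix (Fin n) (Fin n) ℝ) (j : Fin n) :
    matVec M (EuclideanSpace.single j 1) = ∑ l, M l j • EuclideanSpace.single l (1 : ℝ) := by
  ext k
  simp [matVec, Pi.single_apply]

lemma pderiv1_comp_matVec {f : EuclideanSpace ℝ (Fin n) → ℝ} (hf : Differentiable ℝ f)
    (M : Matrix (Fin n) (Fin n) ℝ) (j : Fin n) (x : EuclideanSpace ℝ (Fin n)) :
    pderiv1 j (fun z => f (matVec M z)) x = ∑ l, M l j * pderiv1 l f (matVec M x) := by
  let L := (Matrix.toLpLin 2 2 M).toContinuousLinearMap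
  have hcomp : HasFDerivAt (fun z => f (matVec M z)) ((fderiv ℝ f (matVec M x)).comp L) x :=
    (hf (matVec M x)).hasFDerivAt.comp x L.hasFDerivAt
  calc pderiv1 j (fun z => f (matVec M z)) x
      = fderiv ℝ f (matVec M x) (matVec M (EuclideanSpace.single j 1)) := by
        rw [pderiv1, hcomp.fderiv]; rfl
    _ = ∑ l, M l j * pderiv1 l f (matVec M x) := by
        simp [matVec_single, pderiv1]

end LinearSubstitution

section WeakDerivatives

variable {n : ℕ} {α : Fin n → ℕ} {f g h : EuclideanSpace ℝ (Fin n) → ℝ}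

lemma IsWeakDeriv.const_mul (hfg : IsWeakDeriv α f g) (c : ℝ) :
    IsWeakDeriv α (fun x => c * f x) (fun x => c * g x) := by
  intro φ hφ hφc
  simp only [mul_assoc, integral_const_mul, hfg φ hφ hφc]
  ring

lemma IsWeakDeriv.sum {ι : Type*} {s : Finset ι} {F G : ι → EuclideanSpace ℝ (Fin n) → ℝ}
    (hF : ∀ k ∈ s, LocallyIntegrable (F k)) (hG : ∀ k ∈ s, LocallyIntegrable (G k))
    (hFG : ∀ k ∈ s, IsWeakDeriv α (F k) (G k)) :
    IsWeakDeriv α (fun x => ∑ k ∈ s, F k x) (fun x => ∑ k ∈ s, G k x) := by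
  intro φ hφ hφc
  have hFφ : ∀ k ∈ s, Integrable (fun x => F k x * mderiv α φ x) := fun k hk =>
    (hF k hk).integrable_smul_right_of_hasCompactSupport (contDiff_mderiv hφ α).continuous
      (hasCompactSupport_mderiv hφc α)
  have hGφ : ∀ k ∈ s, Integrable (fun x => G k x * φ x) := fun k hk =>
    (hG k hk).integrable_smul_right_of_hasCompactSupport hφ.continuous hφc
  simp only [Finset.sum_mul]
  rw [integral_finsetSum s hFφ, integral_finsetSum s hGφ, Finset.mul_sum]
  exact Finset.sum_congr rfl fun k hk => hFG k hk φ hφ hφc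

lemma isWeakDeriv_single_add_iff (hfg : IsWeakDeriv α f g) (i : Fin n) :
    IsWeakDeriv (Pi.single i 1 + α) f h ↔ IsWeakDeriv (Pi.single i 1) g h := by
  refine forall_congr' fun φ => forall₂_congr fun hφ hφc => ?_
  have hfφ : ∫ x, f x * mderiv (Pi.single i 1 + α) φ x =
      (-1) ^ (∑ k, α k) * ∫ x, g x * mderiv (Pi.single i 1) φ x := by
    rw [mderiv_single_add hφ, mderiv_single hφ]
    exact hfg _ (contDiff_pderiv1 hφ i) (hasCompactSupport_pderiv1 hφc i)
  have hsign : (-1 : ℝ) ^ (∑ k, (Pi.single i 1 + α : Fin n → ℕ) k) =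
      (-1) ^ (∑ k, α k) * (-1) ^ (∑ k, (Pi.single i 1 : Fin n → ℕ) k) := by
    simp only [Pi.add_apply, Finset.sum_add_distrib, pow_add, mul_comm]
  rw [hfφ, hsign, mul_assoc, mul_right_inj' (pow_ne_zero _ (by norm_num))]

lemma isWeakDeriv_comp_matVec {G : Fin n → EuclideanSpace ℝ (Fin n) → ℝ}
    (hf : LocallyIntegrable f) (hG : ∀ l, LocallyIntegrable (G l))
    (hfG : ∀ l, IsWeakDeriv (Pi.single l 1) f (G l))
    {M : Matrix (Fin n) (Fin n) ℝ} (hM : M.det ≠ 0) (j : Fin n) :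
    IsWeakDeriv (Pi.single j 1) (fun x => f (matVec M x))
      (fun x => ∑ l, M l j * G l (matVec M x)) := by
  intro φ hφ hφc
  let e := matVecEquiv M hM
  let ψ : EuclideanSpace ℝ (Fin n) → ℝ := fun z => φ (e.symm z)
  have hψ : ContDiff ℝ (⊤ : ℕ∞) ψ := hφ.comp e.symm.contDiff
  have hψc : HasCompactSupport ψ := hφc.comp_homeomorph e.symm.toHomeomorph
  have hφψ : φ = fun x => ψ (matVec M x) := funext fun x => by
    simp [ψ, e, ← coe_matVecEquiv hM]
  have hfψ (l : Fin n) : Integrable (fun z => f z * pderiv1 l ψ z) :=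
    hf.integrable_smul_right_of_hasCompactSupport (contDiff_pderiv1 hψ l).continuous
      (hasCompactSupport_pderiv1 hψc l)
  have hGψ (l : Fin n) : Integrable (fun z => G l z * ψ z) :=
    (hG l).integrable_smul_right_of_hasCompactSupport hψ.continuous hψc
  have hparts (l : Fin n) : ∫ z, f z * pderiv1 l ψ z = -∫ z, G l z * ψ z := by
    simpa [mderiv_single hψ] using hfG l ψ hψ hψc
  calc ∫ x, f (matVec M x) * mderiv (Pi.single j 1) φ x
      = ∫ x, ∑ l, M l j * (f (matVec M x) * pderiv1 l ψ (matVec M x)) := by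
        rw [mderiv_single hφ, hφψ]
        simp only [pderiv1_comp_matVec (hψ.differentiable (by simp)), Finset.mul_sum,
          mul_left_comm]
    _ = |M.det|⁻¹ * ∑ l, M l j * ∫ z, f z * pderiv1 l ψ z :=
        integral_sum_mul_comp_matVec hM _ (M · j) fun l _ => hfψ l
    _ = -(|M.det|⁻¹ * ∑ l, M l j * ∫ z, G l z * ψ z) := by
        simp only [hparts, mul_neg, Finset.sum_neg_distrib]
    _ = -∫ x, ∑ l, M l j * (G l (matVec M x) * ψ (matVec M x)) :=
        congrArg Neg.neg (integral_sum_mul_comp_matVec hM _ (M · j) fun l _ => hGψ l).symm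
    _ = (-1) ^ (∑ k, (Pi.single j 1 : Fin n → ℕ) k) *
          ∫ x, (∑ l, M l j * G l (matVec M x)) * φ x := by
        simp [hφψ, Finset.sum_mul, mul_assoc]

lemma IsWeakDeriv.integral {Y : Type*} [MeasurableSpace Y] {μ : Measure Y} [SFinite μ]
    {F G : Y → EuclideanSpace ℝ (Fin n) → ℝ}
    (hF : Integrable (fun p : Y × EuclideanSpace ℝ (Fin n) => F p.1 p.2) (μ.prod volume))
    (hG : Integrable (fun p : Y × EuclideanSpace ℝ (Fin n) => G p.1 p.2) (μ.prod volume))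
    (hFG : ∀ᵐ y ∂μ, IsWeakDeriv α (F y) (G y)) :
    IsWeakDeriv α (fun x => ∫ y, F y x ∂μ) (fun x => ∫ y, G y x ∂μ) := by
  have fubini {H : Y → EuclideanSpace ℝ (Fin n) → ℝ} {χ : EuclideanSpace ℝ (Fin n) → ℝ}
      (hH : Integrable (fun p : Y × EuclideanSpace ℝ (Fin n) => H p.1 p.2) (μ.prod volume))
      (hχ : Continuous χ) (hχc : HasCompactSupport χ) :
      ∫ x, (∫ y, H y x ∂μ) * χ x = ∫ y, (∫ x, H y x * χ x) ∂μ := by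
    obtain ⟨C, hC⟩ := hχ.bounded_above_of_compact_support hχc
    have hHχ : Integrable (fun p : Y × EuclideanSpace ℝ (Fin n) => H p.1 p.2 * χ p.2)
        (μ.prod volume) :=
      hH.mul_bdd hχ.aestronglyMeasurable.comp_snd (ae_of_all _ fun p => hC p.2)
    simp only [← integral_mul_const]
    exact (integral_integral_swap hHχ).symm
  intro φ hφ hφc
  rw [fubini hF (contDiff_mderiv hφ α).continuous (hasCompactSupport_mderiv hφc α),
    fubini hG hφ.continuous hφc, ← integral_const_mul]
  exact integral_congr_ae (hFG.mono fun y hy => hy φ hφ hφc)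

end WeakDerivatives

section SobolevFunctions

variable {n m : ℕ} {f : EuclideanSpace ℝ (Fin n) → ℝ}
  {D : (Fin n → ℕ) → EuclideanSpace ℝ (Fin n) → ℝ} {M : Matrix (Fin n) (Fin n) ℝ}

lemma sum_single_add (i : Fin n) (α : Fin n → ℕ) :
    ∑ k, (Pi.single i 1 + α : Fin n → ℕ) k = ∑ k, α k + 1 := by
  simp [Finset.sum_add_distrib, add_comm]

lemma HasSobolevDerivs.isWeakDeriv_single (hf : HasSobolevDerivs m f D) {α : Fin n → ℕ}
    (hα : ∑ k, α k < m) (i : Fin n) :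
    IsWeakDeriv (Pi.single i 1) (D α) (D (Pi.single i 1 + α)) :=
  (isWeakDeriv_single_add_iff (hf.2 α hα.le).2 i).1 (hf.2 _ ((sum_single_add i α).trans_le hα)).2

lemma HasSobolevDerivs.isWeakDeriv_comp_matVec (hf : HasSobolevDerivs m f D) {α : Fin n → ℕ}
    (hα : ∑ k, α k < m) (hM : M.det ≠ 0) (i : Fin n) :
    IsWeakDeriv (Pi.single i 1) (fun x => D α (matVec M x))
      (fun x => ∑ k, M k i * D (Pi.single k 1 + α) (matVec M x)) :=
  _root_.isWeakDeriv_comp_matVec (hf.2 α hα.le).1.locallyIntegrable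
    (fun k => (hf.2 _ ((sum_single_add k α).trans_le hα)).1.locallyIntegrable)
    (hf.isWeakDeriv_single hα) hM i

lemma HasSobolevDerivs.isWeakDeriv_two_comp_matVec (hf : HasSobolevDerivs 2 f D)
    (hM : M.det ≠ 0) (i j : Fin n) :
    IsWeakDeriv (Pi.single i 1 + Pi.single j 1) (fun x => f (matVec M x))
      (fun x => ∑ k, ∑ l, M k i * D (Pi.single k 1 + Pi.single l 1) (matVec M x) * M l j) := by
  have hint {α : Fin n → ℕ} (hα : ∑ k, α k ≤ 2) (c : ℝ) :
      Integrable (fun x => c * D α (matVec M x)) :=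
    (integrable_comp_matVec hM (hf.2 α hα).1).const_mul c
  have hfirst : IsWeakDeriv (Pi.single j 1) (fun x => f (matVec M x))
      (fun x => ∑ l, M l j * D (Pi.single l 1) (matVec M x)) := by
    simpa only [hf.1, add_zero] using hf.isWeakDeriv_comp_matVec (α := 0) (by simp) hM j
  have hsecond : IsWeakDeriv (Pi.single i 1)
      (fun x => ∑ l, M l j * D (Pi.single l 1) (matVec M x))
      (fun x => ∑ l, M l j * ∑ k, M k i * D (Pi.single k 1 + Pi.single l 1) (matVec M x)) :=
    IsWeakDeriv.sum (fun l _ => (hint (by simp) _).locallyIntegrable)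
      (fun l _ => ((integrable_finsetSum _ fun k _ =>
        hint (by simp [Finset.sum_add_distrib]) _).const_mul _).locallyIntegrable)
      (fun l _ => (hf.isWeakDeriv_comp_matVec (by simp) hM i).const_mul _)
  convert (isWeakDeriv_single_add_iff hfirst i).2 hsecond using 2 with x
  simp only [Finset.mul_sum]
  rw [Finset.sum_comm]
  exact Finset.sum_congr rfl fun l _ => Finset.sum_congr rfl fun k _ => mul_comm _ _

end SobolevFunctions

section HausdorffOperators

variable {n : ℕ} {Y : Type*} [MeasurableSpace Y] {μ : Measure Y}
  {A : Y → Matrix (Fin n) (Fin n) ℝ}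

lemma measurable_matVec_uncurry (hA : ∀ i j, Measurable fun y => A y i j) :
    Measurable (fun p : Y × EuclideanSpace ℝ (Fin n) => matVec (A p.1) p.2) := by
  refine (WithLp.measurable_toLp 2 _).comp (measurable_pi_lambda _ fun i => ?_)
  change Measurable fun p : Y × EuclideanSpace ℝ (Fin n) => ∑ k, A p.1 i k * p.2 k
  fun_prop

lemma measurable_det (hA : ∀ i j, Measurable fun y => A y i j) :
    Measurable fun y => (A y).det := by
  simp only [Matrix.det_apply']
  exact Finset.measurable_sum _ fun σ _ =>
    (Finset.measurable_prod _ fun i _ => hA _ _).const_mul _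

lemma integrable_mul_comp_matVec [SFinite μ] (hA : ∀ i j, Measurable fun y => A y i j)
    (hdet : ∀ᵐ y ∂μ, (A y).det ≠ 0) {c : Y → ℝ} (hc : AEStronglyMeasurable c μ)
    (hint : Integrable (fun y => |(A y).det|⁻¹ * |c y|) μ)
    {g : EuclideanSpace ℝ (Fin n) → ℝ} (hg : Integrable g) :
    Integrable (fun p : Y × EuclideanSpace ℝ (Fin n) => c p.1 * g (matVec (A p.1) p.2))
      (μ.prod volume) := by
  have hqmp : Measure.QuasiMeasurePreserving
      (fun p : Y × EuclideanSpace ℝ (Fin n) => matVec (A p.1) p.2) (μ.prod volume) volume :=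
    QuasiMeasurePreserving.prod_of_right (measurable_matVec_uncurry hA)
      (hdet.mono fun y => quasiMeasurePreserving_matVec)
  have hmeas := hc.comp_fst.mul (hg.aestronglyMeasurable.comp_quasiMeasurePreserving hqmp)
  refine (integrable_prod_iff hmeas).2 ⟨?_, (hint.mul_const (∫ x, ‖g x‖)).congr ?_⟩
  · exact hdet.mono fun y hy => (integrable_comp_matVec hy hg).const_mul (c y)
  · filter_upwards [hdet] with y hy
    calc |(A y).det|⁻¹ * |c y| * ∫ x, ‖g x‖
        = |c y| * (|(A y).det|⁻¹ • ∫ x, ‖g x‖) := by rw [smul_eq_mul]; ring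
      _ = ∫ x, ‖c y * g (matVec (A y) x)‖ := by
        simp only [norm_mul, integral_const_mul, Real.norm_eq_abs,
          ← integral_comp_matVec hy fun x => |g x|]

lemma sq_entry_le_sq_frobNorm (M : Matrix (Fin n) (Fin n) ℝ) (i j : Fin n) :
    M i j ^ 2 ≤ frobNorm M ^ 2 := by
  have hrow (k : Fin n) : 0 ≤ ∑ l, M k l ^ 2 := Finset.sum_nonneg fun l _ => sq_nonneg _
  rw [frobNorm, Real.sq_sqrt (Finset.sum_nonneg fun k _ => hrow k)]
  calc M i j ^ 2 ≤ ∑ l, M i l ^ 2 :=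
        Finset.single_le_sum (f := fun l => M i l ^ 2) (fun l _ => sq_nonneg _) (Finset.mem_univ j)
    _ ≤ ∑ k, ∑ l, M k l ^ 2 :=
        Finset.single_le_sum (f := fun k => ∑ l, M k l ^ 2) (fun k _ => hrow k) (Finset.mem_univ i)

lemma abs_entry_mul_entry_le_sq_frobNorm (M : Matrix (Fin n) (Fin n) ℝ) (i j k l : Fin n) :
    |M i j * M k l| ≤ frobNorm M ^ 2 := by
  have h₁ := sq_entry_le_sq_frobNorm M i j
  have h₂ := sq_entry_le_sq_frobNorm M k l
  rw [abs_le]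
  constructor <;> nlinarith [sq_nonneg (M i j + M k l), sq_nonneg (M i j - M k l)]

lemma integrable_inv_abs_det_mul_abs (hA : ∀ i j, Measurable fun y => A y i j) {c w : Y → ℝ}
    (hc : AEStronglyMeasurable c μ) (hint : Integrable (fun y => |(A y).det|⁻¹ * w y) μ)
    (hcw : ∀ y, |c y| ≤ w y) : Integrable (fun y => |(A y).det|⁻¹ * |c y|) μ := by
  refine hint.mono' ((measurable_det hA).abs.inv.aestronglyMeasurable.mul hc.norm)
    (ae_of_all _ fun y => ?_)
  rw [Real.norm_of_nonneg (by positivity)]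
  exact mul_le_mul_of_nonneg_left (hcw y) (by positivity)

variable [SFinite μ] {Φ : Y → ℝ} {f : EuclideanSpace ℝ (Fin n) → ℝ}
  {D : (Fin n → ℕ) → EuclideanSpace ℝ (Fin n) → ℝ}

lemma isWeakDeriv_two_integral_mul_comp_matVec (hΦ : AEStronglyMeasurable Φ μ)
    (hA : ∀ i j, Measurable fun y => A y i j) (hdet : ∀ᵐ y ∂μ, (A y).det ≠ 0)
    (hint : Integrable (fun y => |(A y).det|⁻¹ * ((1 + frobNorm (A y) ^ 2) * |Φ y|)) μ)
    (hf : HasSobolevDerivs 2 f D) (i j : Fin n) :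
    IsWeakDeriv (Pi.single i 1 + Pi.single j 1) (fun x => ∫ y, Φ y * f (matVec (A y) x) ∂μ)
      (fun x => ∫ y, Φ y * ∑ k, ∑ l,
        A y k i * D (Pi.single k 1 + Pi.single l 1) (matVec (A y) x) * A y l j ∂μ) := by
  refine IsWeakDeriv.integral ?_ ?_
    (hdet.mono fun y hy => (hf.isWeakDeriv_two_comp_matVec hy i j).const_mul (Φ y))
  · have hfi : Integrable f := hf.1 ▸ (hf.2 0 (by simp)).1
    refine integrable_mul_comp_matVec hA hdet hΦ
      (integrable_inv_abs_det_mul_abs hA hΦ hint fun y => ?_) hfi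
    exact le_mul_of_one_le_left (abs_nonneg _) (le_add_of_nonneg_right (sq_nonneg _))
  · have hentry (k l : Fin n) : Integrable (fun p : Y × EuclideanSpace ℝ (Fin n) =>
        A p.1 k i * A p.1 l j * Φ p.1 * D (Pi.single k 1 + Pi.single l 1) (matVec (A p.1) p.2))
        (μ.prod volume) := by
      have hc : AEStronglyMeasurable (fun y => A y k i * A y l j * Φ y) μ :=
        ((hA k i).mul (hA l j)).aestronglyMeasurable.mul hΦ
      refine integrable_mul_comp_matVec hA hdet hc
        (integrable_inv_abs_det_mul_abs hA hc hint fun y => ?_)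
        (hf.2 _ (by simp [Finset.sum_add_distrib])).1
      rw [abs_mul]
      gcongr
      linarith [abs_entry_mul_entry_le_sq_frobNorm (A y) k i l j]
    refine (integrable_finsetSum Finset.univ fun k _ =>
      integrable_finsetSum Finset.univ fun l _ => hentry k l).congr (ae_of_all _ fun p => ?_)
    simp only [Finset.mul_sum]
    exact Finset.sum_congr rfl fun k _ => Finset.sum_congr rfl fun l _ => by ring

theorem weakHessian_hausdorffOp_general (hΦ : AEStronglyMeasurable Φ μ)
    (hA : ∀ i j, Measurable fun y => A y i j) (hinv : ∀ᵐ y ∂μ, Φ y ≠ 0 → (A y).det ≠ 0)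
    (hint : Integrable (fun y => |(A y).det|⁻¹ * (1 + frobNorm (A y) ^ 2) * |Φ y|) μ)
    (hf : HasSobolevDerivs 2 f D) (i j : Fin n) :
    IsWeakDeriv (Pi.single i 1 + Pi.single j 1) (fun x => ∫ y, Φ y * f (matVec (A y) x) ∂μ)
      (fun x => ∫ y, Φ y * ∑ k, ∑ l,
        A y k i * D (Pi.single k 1 + Pi.single l 1) (matVec (A y) x) * A y l j ∂μ) := by
  have hdet : ∀ᵐ y ∂μ.restrict (Function.support Φ), (A y).det ≠ 0 :=
    (ae_restrict_iff'₀ hΦ.nullMeasurableSet_support).2 hinv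
  have hrestrict (H : Y → ℝ) :
      ∫ y, Φ y * H y ∂μ = ∫ y in Function.support Φ, Φ y * H y ∂μ :=
    (setIntegral_eq_integral_of_forall_compl_eq_zero fun y hy => by
      rw [Function.notMem_support.1 hy, zero_mul]).symm
  simp only [mul_assoc |_|⁻¹] at hint
  simp only [hrestrict]
  exact isWeakDeriv_two_integral_mul_comp_matVec hΦ.restrict hA hdet hint.restrict hf i j

end HausdorffOperators

/-- Under the integrability condition with `k = 2`, for `f ∈ W^{2,1}(ℝⁿ)` with
weak-derivative family `D`, the matrix of second-order weak derivatives of `H_{Φ,A} f` is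
`(∂_{ij} H_{Φ,A}f(x)) = ∫ Φ(y) A(y)ᵀ · (∂_{kl}f(A(y)x)) · A(y) dy`, i.e. its `(i,j)` entry is
`x ↦ ∫ Φ(y) Σ_k Σ_l a_{ki}(y) (∂_k ∂_l f)(A(y)x) a_{lj}(y) dy`. -/
theorem weakHessian_hausdorffOp (n : ℕ)
    (Φ : EuclideanSpace ℝ (Fin n) → ℝ)
    (A : EuclideanSpace ℝ (Fin n) → Matrix (Fin n) (Fin n) ℝ)
    (hΦ : Measurable Φ) (hA : ∀ i j, Measurable fun y => A y i j)
    (hinv : ∀ᵐ y : EuclideanSpace ℝ (Fin n), Φ y ≠ 0 → (A y).det ≠ 0)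
    (hint : Integrable
      (fun y => |(A y).det|⁻¹ * (1 + frobNorm (A y) ^ 2) * |Φ y|))
    (f : EuclideanSpace ℝ (Fin n) → ℝ)
    (D : (Fin n → ℕ) → EuclideanSpace ℝ (Fin n) → ℝ)
    (hf : HasSobolevDerivs 2 f D)
    (i j : Fin n) :
    IsWeakDeriv (Pi.single i 1 + Pi.single j 1) (hausdorffOp Φ A f)
      (fun x => ∫ y, Φ y *
        ∑ k : Fin n, ∑ l : Fin n,
          A y k i * D (Pi.single k 1 + Pi.single l 1) (matVec (A y) x) * A y l j) := by
  exact weakHessian_hausdorffOp_general hΦ.aestronglyMeasurable hA hinv hint hf i j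

end
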